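/- Adding an edge within a strongly connected component preserves the E-separation model: let G = (V, E_d) be a directed graph, i, j ∈ V with i ≠ j, (i, j) ∉ E_d, and i ∈ scc_G(j), and let G′ = (V, E_d ∪ {(i, j)}). Then I_E^G = I_E^{G′}. -/

import Mathlib

namespace ESepPaper

/-- A directed mixed graph: directed edges and bidirected edges over a node type `V`.
A directed graph (DG) is a DMG with `Ebi = ∅`. -/
structure DMG (V : Type) where
  Ed : Set (V × V)
  Ebi : Set (Sym2 V)

variable {V : Type}

/-- `G.ancestor u v` : there is a directed path `u → … → v` (possibly trivial). -/
def DMG.ancestor (G : DMG V) : V → V → Prop :=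
  Relation.ReflTransGen (fun u v => (u, v) ∈ G.Ed)

/-- Ancestors of a set `C`. -/
def DMG.anc (G : DMG V) (C : Set V) : Set V := {u | ∃ v ∈ C, G.ancestor u v}

/-- Strongly connected component of `v`. -/
def DMG.scc (G : DMG V) (v : V) : Set V := {w | G.ancestor w v ∧ G.ancestor v w}

/-- Parents of a set of nodes. -/
def DMG.pa (G : DMG V) (S : Set V) : Set V := {w | ∃ v ∈ S, (w, v) ∈ G.Ed}

/-- Kind of a traversed edge on a walk: forward directed, backward directed, or bidirected. -/
inductive LinkType | fwd | bwd | bi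
deriving DecidableEq

/-- Validity of a link of kind `t` between consecutive walk nodes `u` and `v`. -/
def DMG.linkOK (G : DMG V) (u v : V) : LinkType → Prop
  | .fwd => (u, v) ∈ G.Ed
  | .bwd => (v, u) ∈ G.Ed
  | .bi => s(u, v) ∈ G.Ebi

/-- Arrowhead at the second (right) endpoint of the link. -/
def LinkType.headR : LinkType → Prop
  | .fwd => True
  | .bwd => False
  | .bi => True

/-- Arrowhead at the first (left) endpoint of the link. -/
def LinkType.headL : LinkType → Prop
  | .fwd => False
  | .bwd => True
  | .bi => True

/-- Tail at the second (right) endpoint. -/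
def LinkType.tailR (t : LinkType) : Prop := t = .bwd

/-- Tail at the first (left) endpoint. -/
def LinkType.tailL (t : LinkType) : Prop := t = .fwd

/-- Walks in a DMG. -/
inductive DMG.Walk (G : DMG V) : V → V → Type
  | nil (v : V) : DMG.Walk G v v
  | cons {u v w : V} (t : LinkType) (h : G.linkOK u v t) (p : DMG.Walk G v w) : DMG.Walk G u w

/-- An interior node on a walk, whose incoming link is `t1` and outgoing link is `t2`,
is a collider iff both links have an arrowhead at it. -/
def colliderAt (t1 t2 : LinkType) : Prop := t1.headR ∧ t2.headL

/-- An interior non-collider `v` between neighbours `u` (incoming link `t1`) and `w`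
(outgoing link `t2`) is unblockable: on every side where the link has a tail at `v`, the
corresponding neighbour lies in `scc_G(v)` (left-chain/right-chain/fork cases). -/
def unblockableAt (G : DMG V) (u v w : V) (t1 t2 : LinkType) : Prop :=
  (t1.tailR → u ∈ G.scc v) ∧ (t2.tailL → w ∈ G.scc v)

namespace DMG.Walk

variable {G : DMG V}

/-- First node of a walk. -/
def first {a b : V} (_ : G.Walk a b) : V := a

def length : {a b : V} → G.Walk a b → ℕ
  | _, _, .nil _ => 0
  | _, _, .cons _ _ p => p.length + 1

def support : {a b : V} → G.Walk a b → List V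
  | a, _, .nil _ => [a]
  | a, _, .cons _ _ p => a :: p.support

/-- Auxiliary: σ-openness of the remainder of a walk, where `u` is the previous node and
`t1` the link from `u` into the current first node. -/
def sigmaOpenAux (C : Set V) : (u : V) → LinkType → {b c : V} → G.Walk b c → Prop
  | _, _, _, _, .nil _ => True
  | u, t1, v, _, .cons t2 _ q =>
      ((colliderAt t1 t2 → v ∈ G.anc C) ∧
       (¬ colliderAt t1 t2 → ¬ unblockableAt G u v q.first t1 t2 → v ∉ C)) ∧
      sigmaOpenAux C v t2 q

/-- The walk is σ-open given `C`: every collider on it is an ancestor of a node of `C`, and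
no blockable non-collider on it lies in `C`. -/
def sigmaOpen (C : Set V) : {a b : V} → G.Walk a b → Prop
  | _, _, .nil _ => True
  | a, _, .cons t _ q => sigmaOpenAux C a t q

/-- All links are forward directed. -/
def IsDirected : {a b : V} → G.Walk a b → Prop
  | _, _, .nil _ => True
  | _, _, .cons t _ p => t = .fwd ∧ p.IsDirected

/-- Interior nodes of the walk (all nodes except the two endpoints). -/
def interior {a b : V} (p : G.Walk a b) : List V := p.support.tail.dropLast

/-- Arrowhead at the first endpoint. -/
def headAtStart : {a b : V} → G.Walk a b → Prop
  | _, _, .nil _ => False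
  | _, _, .cons t _ _ => t.headL

def headAtEndAux : LinkType → {a b : V} → G.Walk a b → Prop
  | t, _, _, .nil _ => t.headR
  | _, _, _, .cons t _ q => headAtEndAux t q

/-- Arrowhead at the last endpoint. -/
def headAtEnd : {a b : V} → G.Walk a b → Prop
  | _, _, .nil _ => False
  | _, _, .cons t _ q => headAtEndAux t q

def noCollidersAux : LinkType → {a b : V} → G.Walk a b → Prop
  | _, _, _, .nil _ => True
  | t1, _, _, .cons t2 _ q => ¬ colliderAt t1 t2 ∧ noCollidersAux t2 q

/-- There is no collider on the walk. -/
def NoColliders : {a b : V} → G.Walk a b → Prop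
  | _, _, .nil _ => True
  | _, _, .cons t _ q => noCollidersAux t q

def collidersInAux (S : Set V) : LinkType → {a b : V} → G.Walk a b → Prop
  | _, _, _, .nil _ => True
  | t1, v, _, .cons t2 _ q => (colliderAt t1 t2 → v ∈ S) ∧ collidersInAux S t2 q

/-- Every collider on the walk lies in `S`. -/
def CollidersIn (S : Set V) : {a b : V} → G.Walk a b → Prop
  | _, _, .nil _ => True
  | _, _, .cons t _ q => collidersInAux S t q

def noncollUnblAux : (u : V) → LinkType → {b c : V} → G.Walk b c → Prop
  | _, _, _, _, .nil _ => True
  | u, t1, v, _, .cons t2 _ q =>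
      (¬ colliderAt t1 t2 → unblockableAt G u v q.first t1 t2) ∧ noncollUnblAux v t2 q

/-- Every interior non-collider on the walk is unblockable. -/
def NoncollidersUnblockable : {a b : V} → G.Walk a b → Prop
  | _, _, .nil _ => True
  | a, _, .cons t _ q => noncollUnblAux a t q

/-- The set of edges occurring on a walk (directed edges as ordered pairs in `E_d`,
bidirected edges as unordered pairs). -/
def edges : {a b : V} → G.Walk a b → Set ((V × V) ⊕ Sym2 V)
  | _, _, .nil _ => ∅
  | a, _, .cons t _ p =>
      insert (match t with
        | .fwd => Sum.inl (a, p.first)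
        | .bwd => Sum.inl (p.first, a)
        | .bi => Sum.inr s(a, p.first)) p.edges

/-- Concatenation of walks. -/
def append : {a b c : V} → G.Walk a b → G.Walk b c → G.Walk a c
  | _, _, _, .nil _, q => q
  | _, _, _, .cons t h p, q => .cons t h (p.append q)

/-- A walk `v_0, …, v_{n+1}` is a path if no node besides the final endpoint occurs more
than once, i.e. `v_0, …, v_n` are pairwise distinct. -/
def IsPath {a b : V} (p : G.Walk a b) : Prop := p.support.dropLast.Nodup

end DMG.Walk

/-- `A` is σ-separated from `B` given `C` in `G`: every walk from a node of `A` to a node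
of `B` is σ-blocked given `C`. -/
def DMG.sigmaSep (G : DMG V) (A B C : Set V) : Prop :=
  ∀ a ∈ A, ∀ b ∈ B, ∀ p : G.Walk a b, ¬ p.sigmaOpen C

/-- The lifted dependency graph of `G`, on two copies of `V`
(`Sum.inl` is the past copy `V_0`, `Sum.inr` the future copy `V_1`). -/
def DMG.lift (G : DMG V) : DMG (V ⊕ V) where
  Ed := {e | ∃ u v, (u, v) ∈ G.Ed ∧
        (e = (Sum.inl u, Sum.inl v) ∨ e = (Sum.inl u, Sum.inr v) ∨
         e = (Sum.inr u, Sum.inr v))}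
  Ebi := {e | ∃ u v, s(u, v) ∈ G.Ebi ∧
        (e = s(Sum.inl u, Sum.inl v) ∨ e = s(Sum.inl u, Sum.inr v) ∨
         e = s(Sum.inr u, Sum.inl v) ∨ e = s(Sum.inr u, Sum.inr v))}

/-- `B` is E-separated from `A` given `C` in `G`:
`A_0` is σ-separated from `B_1` given `C_0 ∪ (C_1 \ B_1)` in the lifted dependency graph. -/
def DMG.ESep (G : DMG V) (A B C : Set V) : Prop :=
  G.lift.sigmaSep (Sum.inl '' A) (Sum.inr '' B)
    ((Sum.inl '' C) ∪ ((Sum.inr '' C) \ (Sum.inr '' B)))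

/-- The independence model `I_E^G` of E-separation triples. -/
def DMG.IE (G : DMG V) : Set (Set V × Set V × Set V) :=
  {t | G.ESep t.1 t.2.1 t.2.2}


/-- The latent projection of `G` onto the observed nodes `O`: a directed edge when there is
a non-trivial directed walk whose interior nodes are all latent, and a bidirected edge when
there is a non-trivial collider-free walk with arrowheads at both endpoints whose interior
nodes are all latent. -/
def DMG.latentProj (G : DMG V) (O : Set V) : DMG O where
  Ed := {e | ∃ p : G.Walk e.1.val e.2.val,
          p.IsDirected ∧ 0 < p.length ∧ ∀ x ∈ p.interior, x ∉ O}
  Ebi := {e | ∃ u v : O, e = s(u, v) ∧ ∃ p : G.Walk u.val v.val,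
          p.headAtStart ∧ p.headAtEnd ∧ p.NoColliders ∧ 0 < p.length ∧
          ∀ x ∈ p.interior, x ∉ O}

/-- The last edge of the walk `p` before entering `scc_G(w)` has an arrowhead at its
endpoint in `scc_G(w)` (vacuous if the walk never leaves `scc_G(w)`). -/
def DMG.lastEdgeInto (G : DMG V) {a b : V} (w : V) (p : G.Walk a b) : Prop :=
  (∀ x ∈ p.support, x ∈ G.scc w) ∨
  ∃ (x y : V) (t : LinkType) (h : G.linkOK x y t) (p₁ : G.Walk a x) (p₂ : G.Walk y b),
    p = p₁.append (.cons t h p₂) ∧ x ∉ G.scc w ∧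
    (∀ z ∈ p₂.support, z ∈ G.scc w) ∧ t.headR

/-- An (asymmetric) inducing path from `v` to `w`: a non-trivial path such that every
collider on it is an ancestor of `v` or `w`, every interior non-collider is unblockable,
and the last edge before entering `scc_G(w)` points into `scc_G(w)`. -/
def DMG.IsInducingPath (G : DMG V) {v w : V} (p : G.Walk v w) : Prop :=
  0 < p.length ∧ p.IsPath ∧
  p.CollidersIn (G.anc {v, w}) ∧ p.NoncollidersUnblockable ∧ G.lastEdgeInto w p

section Helpers

variable {W : Type} {H K : DMG W} {C : Set W}

open DMG DMG.Walk

theorem helper_fwd_ext {c v : W} (p : H.Walk v c)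
    (hp : ∀ y, sigmaOpenAux C y .fwd p) {x : W} (hx : H.ancestor x v) (hv : H.ancestor v x) :
    ∃ q : H.Walk x c, ∀ y, sigmaOpenAux C y .fwd q := by
  unfold DMG.ancestor at hx
  induction hx using Relation.ReflTransGen.head_induction_on with
  | refl => exact ⟨p, hp⟩
  | @head a b hab hbv ih =>
    have hba : H.ancestor b a := Relation.ReflTransGen.trans hbv hv
    have hab' : H.ancestor a b := Relation.ReflTransGen.single hab
    obtain ⟨q, hq⟩ := ih (Relation.ReflTransGen.trans hv hab')
    refine ⟨.cons .fwd hab q, fun y => ⟨⟨?_, ?_⟩, hq _⟩⟩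
    · intro h; exact h.2.elim
    · intro _ h
      exact (h ⟨fun h => (by cases h), fun _ => ⟨hba, hab'⟩⟩).elim

/-- Node condition at `b` with incoming link `t` from `u` and outgoing link `bwd`. -/
def NodeCond (H : DMG W) (C : Set W) (u : W) (t : LinkType) (b : W) : Prop :=
  (t.headR → b ∈ H.anc C) ∧ (t = .bwd → u ∉ H.scc b → b ∉ C)

theorem helper_bwd_cons {b v c u : W} {t : LinkType} (h : H.linkOK b v .bwd) (p : H.Walk v c)
    (hp : sigmaOpenAux C b .bwd p) (hn : NodeCond H C u t b) :
    sigmaOpenAux C u t (.cons .bwd h p) := by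
  refine ⟨⟨fun hc => hn.1 hc.1, fun hc hu => ?_⟩, hp⟩
  cases t with
  | fwd => exact (hc ⟨trivial, trivial⟩).elim
  | bi => exact (hc ⟨trivial, trivial⟩).elim
  | bwd =>
    exact hn.2 rfl fun hs => hu ⟨fun _ => hs, fun h => by cases h⟩

theorem helper_bwd_ext {b x c : W} (hx : H.ancestor x b) (hb : H.ancestor b x) 
    (r : H.Walk x c) (h1 : r.sigmaOpen C)
    (h2 : ∀ u t, NodeCond H C u t x → sigmaOpenAux C u t r) :
    ∃ q : H.Walk b c, q.sigmaOpen C ∧ ∀ u t, NodeCond H C u t b → sigmaOpenAux C u t q := by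
  unfold DMG.ancestor at hx
  induction hx with
  | refl => exact ⟨r, h1, h2⟩
  | @tail y z hxy hyz ih =>
    have hyz' : H.ancestor y z := Relation.ReflTransGen.single hyz
    obtain ⟨q, -, hq⟩ := ih (Relation.ReflTransGen.trans hyz' hb)
    have hzy : H.ancestor z y := Relation.ReflTransGen.trans hb hxy
    have : sigmaOpenAux C z .bwd q :=
      hq _ _ ⟨fun h => h.elim, fun _ h => (h ⟨hzy, hyz'⟩).elim⟩
    exact ⟨.cons .bwd hyz q, this, fun u t hn => helper_bwd_cons _ _ this hn⟩

theorem helper_bwd_step {b v c : W}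
    (hK : ∃ x, (v, x) ∈ H.Ed ∧ x ∈ H.scc b) (p : H.Walk v c)
    (hp : ∀ u', (b ∈ H.scc v → u' ∈ H.scc v) → sigmaOpenAux C u' .bwd p) :
    ∃ q : H.Walk b c, q.sigmaOpen C ∧ ∀ u t, NodeCond H C u t b → sigmaOpenAux C u t q := by
  obtain ⟨x, hvx, hxb, hbx⟩ := hK
  have : sigmaOpenAux C x .bwd p := hp x fun h =>
    ⟨Relation.ReflTransGen.trans hxb h.1, Relation.ReflTransGen.trans h.2 hbx⟩
  exact helper_bwd_ext hxb hbx (.cons .bwd hvx p) this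
    fun u t hn => helper_bwd_cons _ _ this hn

theorem helper_aux (hanc : K.ancestor = H.ancestor) (hbi : K.Ebi ⊆ H.Ebi)
    (hK : ∀ u v, (u, v) ∈ K.Ed → ∃ x, (u, x) ∈ H.Ed ∧ x ∈ H.scc v)
    {b c : W} (p : K.Walk b c) : ∀ u t, sigmaOpenAux C u t p →
      ∃ q : H.Walk b c, ∀ u', (t = .bwd → u ∈ H.scc b → u' ∈ H.scc b) →
        sigmaOpenAux C u' t q := by
  have hA : K.anc C = H.anc C := by unfold DMG.anc; rw [hanc]
  have hS : ∀ v, K.scc v = H.scc v := by intro v; unfold DMG.scc; rw [hanc]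
  induction p with
  | nil v => exact fun u t _ => ⟨.nil v, fun _ _ => trivial⟩
  | @cons b v c t2 h p ih =>
    rintro u t ⟨⟨h1, h2⟩, h3⟩
    obtain ⟨q, hq⟩ := ih _ _ h3
    simp only [unblockableAt, hS, hA] at h1 h2
    cases t2 with
    | fwd =>
      obtain ⟨x, hbx, hxv, hvx⟩ := hK _ _ h
      obtain ⟨r, hr⟩ := helper_fwd_ext q (fun y => hq y fun h => by cases h) hxv hvx
      refine ⟨.cons .fwd hbx r, fun u' hu' => ⟨⟨h1, fun hc hu => h2 hc ?_⟩, hr _⟩⟩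
      rintro ⟨k1, k2⟩
      refine hu ⟨fun ht => hu' ht (k1 ht), fun _ => ?_⟩
      have k3 := k2 rfl
      exact ⟨Relation.ReflTransGen.trans hxv k3.1, Relation.ReflTransGen.trans k3.2 hvx⟩
    | bwd =>
      obtain ⟨r, -, hr⟩ := helper_bwd_step (hK _ _ h) q (fun u' hu' => hq u' fun _ => hu')
      refine ⟨r, fun u' hu' => hr _ _ ⟨fun ht => h1 ⟨ht, trivial⟩, fun ht hu => ?_⟩⟩
      subst ht
      exact h2 (fun hc => hc.1) fun k => hu (hu' rfl (k.1 rfl))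
    | bi =>
      refine ⟨.cons .bi (hbi h) q, fun u' hu' => ⟨⟨h1, fun hc hu => h2 hc ?_⟩,
        hq _ fun h => by cases h⟩⟩
      rintro ⟨k1, k2⟩
      exact hu ⟨fun ht => hu' ht (k1 ht), fun h => by cases h⟩

theorem helper_open (hanc : K.ancestor = H.ancestor) (hbi : K.Ebi ⊆ H.Ebi)
    (hK : ∀ u v, (u, v) ∈ K.Ed → ∃ x, (u, x) ∈ H.Ed ∧ x ∈ H.scc v)
    {b c : W} (p : K.Walk b c) (hp : p.sigmaOpen C) :
    ∃ q : H.Walk b c, q.sigmaOpen C := by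
  cases p with
  | nil v => exact ⟨.nil _, trivial⟩
  | @cons b v c t2 h p =>
    obtain ⟨q, hq⟩ := helper_aux hanc hbi hK p _ _ hp
    cases t2 with
    | fwd =>
      obtain ⟨x, hbx, hxv, hvx⟩ := hK _ _ h
      obtain ⟨r, hr⟩ := helper_fwd_ext q (fun y => hq y fun h => by cases h) hxv hvx
      exact ⟨.cons .fwd hbx r, hr _⟩
    | bwd =>
      obtain ⟨r, hr, -⟩ := helper_bwd_step (hK _ _ h) q (fun u' hu' => hq u' fun _ => hu')
      exact ⟨r, hr⟩
    | bi => exact ⟨.cons .bi (hbi h) q, hq _ fun h => by cases h⟩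

theorem helper_sep (hsub : H.Ed ⊆ K.Ed) (hbi : K.Ebi = H.Ebi)
    (hK : ∀ u v, (u, v) ∈ K.Ed → ∃ x, (u, x) ∈ H.Ed ∧ x ∈ H.scc v) (A B : Set W) :
    H.sigmaSep A B C ↔ K.sigmaSep A B C := by
  have hanc : K.ancestor = H.ancestor := by
    funext a b
    apply propext
    constructor
    · intro h
      unfold DMG.ancestor at h
      induction h with
      | refl => exact Relation.ReflTransGen.refl
      | tail _ h ih =>
        obtain ⟨x, h1, h2, -⟩ := hK _ _ h
        exact Relation.ReflTransGen.trans (Relation.ReflTransGen.tail ih h1) h2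
    · intro h
      unfold DMG.ancestor at h
      induction h with
      | refl => exact Relation.ReflTransGen.refl
      | tail _ h ih => exact Relation.ReflTransGen.tail ih (hsub h)
  constructor
  · intro h a ha b hb p hp
    obtain ⟨q, hq⟩ := helper_open hanc hbi.le hK p hp
    exact h a ha b hb q hq
  · intro h a ha b hb p hp
    obtain ⟨q, hq⟩ := helper_open hanc.symm hbi.ge
      (fun u v huv => ⟨v, hsub huv, Relation.ReflTransGen.refl, Relation.ReflTransGen.refl⟩) p hp
    exact h a ha b hb q hq

theorem helper_inl (G : DMG W) {a b : W} (h : G.ancestor a b) :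
    G.lift.ancestor (Sum.inl a) (Sum.inl b) := by
  unfold DMG.ancestor at h
  induction h with
  | refl => exact Relation.ReflTransGen.refl
  | tail _ h ih => exact Relation.ReflTransGen.tail ih ⟨_, _, h, Or.inl rfl⟩

theorem helper_inr (G : DMG W) {a b : W} (h : G.ancestor a b) :
    G.lift.ancestor (Sum.inr a) (Sum.inr b) := by
  unfold DMG.ancestor at h
  induction h with
  | refl => exact Relation.ReflTransGen.refl
  | tail _ h ih => exact Relation.ReflTransGen.tail ih ⟨_, _, h, Or.inr (Or.inr rfl)⟩

end Helpers

/-- Adding a directed edge within a strongly connected component preserves the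
E-separation independence model. -/
theorem add_edge_within_scc {V : Type} [Fintype V] (G : DMG V) (hG : G.Ebi = ∅)
    (i j : V) (hij : i ≠ j) (hE : (i, j) ∉ G.Ed) (hscc : i ∈ G.scc j) :
    G.IE = (DMG.mk (insert (i, j) G.Ed) G.Ebi).IE := by
  have key : ∀ u v, (u, v) ∈ insert (i, j) G.Ed → ∃ x, (u, x) ∈ G.Ed ∧ x ∈ G.scc v := by
    intro u v huv
    rcases huv with huv | huv
    · obtain ⟨rfl, rfl⟩ := Prod.mk.inj huv
      rcases Relation.ReflTransGen.cases_head hscc.1 with h | ⟨x, h1, h2⟩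
      · exact (hij h).elim
      · exact ⟨x, h1, h2, Relation.ReflTransGen.tail hscc.2 h1⟩
    · exact ⟨v, huv, Relation.ReflTransGen.refl, Relation.ReflTransGen.refl⟩
  ext ⟨A, B, C⟩
  refine helper_sep (H := G.lift) (K := (DMG.mk (insert (i, j) G.Ed) G.Ebi).lift) ?_ rfl ?_ _ _
  · rintro e ⟨u, v, h, he⟩
    exact ⟨u, v, Or.inr h, he⟩
  · rintro a b ⟨u, v, h, he⟩
    obtain ⟨x, h1, h2, h3⟩ := key u v h
    rcases he with he | he | he <;> obtain ⟨rfl, rfl⟩ := Prod.mk.inj he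
    · exact ⟨Sum.inl x, ⟨u, x, h1, Or.inl rfl⟩, helper_inl G h2, helper_inl G h3⟩
    · exact ⟨Sum.inr x, ⟨u, x, h1, Or.inr (Or.inl rfl)⟩, helper_inr G h2, helper_inr G h3⟩
    · exact ⟨Sum.inr x, ⟨u, x, h1, Or.inr (Or.inr rfl)⟩, helper_inr G h2, helper_inr G h3⟩

end ESepPaper
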